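/- Let m̄ > 0 and let U : ℝ² × ℝ → ℝ be a smooth solution of m̄ ∂²_τ U = Δ_X U whose initial data φ = U(·,0), ψ = ∂_τ U(·,0) are smooth and compactly supported with ∇φ, ψ ∈ H⁵(ℝ²). Then there is a constant C depending only on m̄ such that for all ε ∈ (0,1] and all t ∈ ℝ: the ℓ²(ℤ²)-norm of the function j ↦ Δ[U(ε·, εt)](j) − ε² (Δ_X U)(εj, εt) (discrete Laplacian applied to j ↦ U(εj, εt)) is at most 4 C ε³ (‖∇φ‖_{H⁵} + ‖ψ‖_{H⁵}). -/

import Mathlib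

open MeasureTheory

noncomputable section

/-- The discrete Laplacian on `ℤ²`. -/
def dLap (u : ℤ × ℤ → ℝ) (j : ℤ × ℤ) : ℝ :=
  -4 * u j + u (j + (1, 0)) + u (j - (1, 0)) + u (j + (0, 1)) + u (j - (0, 1))

/-- Second partial derivative in the first spatial coordinate. -/
def d2x1 (f : ℝ × ℝ → ℝ) (X : ℝ × ℝ) : ℝ :=
  deriv (fun a => deriv (fun b => f (b, X.2)) a) X.1

/-- Second partial derivative in the second spatial coordinate. -/
def d2x2 (f : ℝ × ℝ → ℝ) (X : ℝ × ℝ) : ℝ :=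
  deriv (fun a => deriv (fun b => f (X.1, b)) a) X.2

/-- The continuous Laplacian on `ℝ²`. -/
def cLap (f : ℝ × ℝ → ℝ) (X : ℝ × ℝ) : ℝ := d2x1 f X + d2x2 f X

/-- Sobolev `H^k` norm: `Σ_{n=0}^k ‖ |Dⁿ f| ‖_{L²(ℝ²)}`. -/
def HkNorm (k : ℕ) {E : Type*} [NormedAddCommGroup E] [NormedSpace ℝ E]
    (f : ℝ × ℝ → E) : ℝ :=
  ∑ n ∈ Finset.range (k + 1),
    (∫ X : ℝ × ℝ, ‖iteratedFDeriv ℝ n f X‖ ^ 2) ^ ((1 : ℝ) / 2)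

/-- A lattice point scaled by `ε`. -/
def sc (ε : ℝ) (j : ℤ × ℤ) : ℝ × ℝ := (ε * (j.1 : ℝ), ε * (j.2 : ℝ))


lemma aux_mvt (f f' : ℝ → ℝ) (K ε : ℝ) (hd : ∀ s, HasDerivAt f (f' s) s) (h0 : f 0 = 0)
    (hK : ∀ s, 0 ≤ s → s ≤ ε → |f' s| ≤ K) : ∀ s, 0 ≤ s → s ≤ ε → |f s| ≤ K * ε := by
  intro s hs hsε
  have hK0 : 0 ≤ K := (abs_nonneg _).trans (hK 0 le_rfl (hs.trans hsε))
  have := (convex_Icc (0:ℝ) ε).norm_image_sub_le_of_norm_hasDerivWithin_le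
    (f := f) (f' := f') (C := K) (x := 0) (y := s)
    (fun x _ => (hd x).hasDerivWithinAt) (fun x hx => hK x hx.1 hx.2)
    ⟨le_rfl, hs.trans hsε⟩ ⟨hs, hsε⟩
  rw [h0, sub_zero, sub_zero, Real.norm_eq_abs, Real.norm_eq_abs, abs_of_nonneg hs] at this
  exact this.trans (mul_le_mul_of_nonneg_left hsε hK0)

lemma aux_taylor (u0 u1 u2 u3 u4 : ℝ → ℝ) (h0 : ∀ s, HasDerivAt u0 (u1 s) s)
    (h1 : ∀ s, HasDerivAt u1 (u2 s) s) (h2 : ∀ s, HasDerivAt u2 (u3 s) s)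
    (h3 : ∀ s, HasDerivAt u3 (u4 s) s) (hc : Continuous u4) (x ε : ℝ) (hε : 0 < ε) :
    |u0 (x + ε) + u0 (x - ε) - 2 * u0 x - ε ^ 2 * u2 x|
      ≤ ε ^ 3 * ∫ s in (x - ε)..(x + ε), |u4 s| := by
  set M := ∫ s in (x - ε)..(x + ε), |u4 s| with hM
  have hp : ∀ (u u' : ℝ → ℝ), (∀ s, HasDerivAt u (u' s) s) → ∀ s,
      HasDerivAt (fun s => u (x + s)) (u' (x + s)) s := fun u u' h s =>
    (h (x + s)).comp_const_add x s
  have hm : ∀ (u u' : ℝ → ℝ), (∀ s, HasDerivAt u (u' s) s) → ∀ s,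
      HasDerivAt (fun s => u (x - s)) (- u' (x - s)) s := fun u u' h s =>
    (h (x - s)).comp_const_sub x s
  have b3 : ∀ s, 0 ≤ s → s ≤ ε → |u3 (x + s) - u3 (x - s)| ≤ M := by
    intro s hs hsε
    rw [← intervalIntegral.integral_eq_sub_of_hasDerivAt (f := u3) (f' := u4)
      (fun y _ => h3 y) (hc.intervalIntegrable _ _)]
    refine (intervalIntegral.abs_integral_le_integral_abs (by linarith)).trans ?_
    exact intervalIntegral.integral_mono_interval (by linarith) (by linarith) (by linarith)
      (Filter.Eventually.of_forall fun y => abs_nonneg _) (hc.abs.intervalIntegrable _ _)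
  have b2 := aux_mvt (fun s => u2 (x + s) + u2 (x - s) - 2 * u2 x)
    (fun s => u3 (x + s) - u3 (x - s)) M ε
    (fun s => by
      exact (((hp u2 u3 h2 s).add (hm u2 u3 h2 s)).sub_const (2 * u2 x)).congr_deriv (by ring))
    (by simp; ring) b3
  have b1 := aux_mvt (fun s => u1 (x + s) - u1 (x - s) - s * (2 * u2 x))
    (fun s => u2 (x + s) + u2 (x - s) - 2 * u2 x) (M * ε) ε
    (fun s => by
      exact (((hp u1 u2 h1 s).sub (hm u1 u2 h1 s)).sub
        ((hasDerivAt_id s).mul_const (2 * u2 x))).congr_deriv (by ring))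
    (by simp) b2
  have b0 := aux_mvt (fun s => u0 (x + s) + u0 (x - s) - 2 * u0 x - s ^ 2 * u2 x)
    (fun s => u1 (x + s) - u1 (x - s) - s * (2 * u2 x)) (M * ε * ε) ε
    (fun s => by
      exact ((((hp u0 u1 h0 s).add (hm u0 u1 h0 s)).sub_const (2 * u0 x)).sub
        ((hasDerivAt_pow 2 s).mul_const (u2 x))).congr_deriv (by simp; ring))
    (by simp; ring) b1 ε hε.le le_rfl
  calc _ ≤ _ := b0
    _ = _ := by ring

lemma aux_cs (u : ℝ → ℝ) (hu : Continuous u) (a b : ℝ) (hab : a < b) :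
    (∫ s in a..b, |u s|) ^ 2 ≤ (b - a) * ∫ s in a..b, u s ^ 2 := by
  set I := ∫ s in a..b, |u s|
  set c := I / (b - a)
  have h : 0 ≤ ∫ s in a..b, (|u s| - c) ^ 2 :=
    intervalIntegral.integral_nonneg hab.le fun s _ => sq_nonneg _
  have e : ∫ s in a..b, (|u s| - c) ^ 2
      = (∫ s in a..b, u s ^ 2) - 2 * c * I + (b - a) * c ^ 2 := by
    have : ∀ s, (|u s| - c) ^ 2 = u s ^ 2 - 2 * c * |u s| + c ^ 2 := fun s => by
      rw [sub_sq, sq_abs]; ring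
    simp_rw [this]
    rw [intervalIntegral.integral_add, intervalIntegral.integral_sub,
      intervalIntegral.integral_const_mul, intervalIntegral.integral_const]
    · simp [I]
    all_goals apply Continuous.intervalIntegrable; fun_prop
  rw [e] at h
  have hba : 0 < b - a := sub_pos.2 hab
  have hI : c * (b - a) = I := by simp only [c]; field_simp
  rw [← hI] at h ⊢
  nlinarith [mul_nonneg hba.le h]

lemma aux_trace (v v' : ℝ → ℝ) (hd : ∀ s, HasDerivAt v (v' s) s) (hc : Continuous v')
    (y ε : ℝ) (hε : 0 < ε) :
    ε * v y ^ 2 ≤ 2 * (∫ r in y..(y + ε), v r ^ 2) + 2 * ε ^ 2 * ∫ r in y..(y + ε), v' r ^ 2 := by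
  have hv : Continuous v := continuous_iff_continuousAt.2 fun s => (hd s).continuousAt
  set J := ∫ r in y..(y + ε), v' r ^ 2
  have key : ∀ r ∈ Set.Icc y (y + ε), v y ^ 2 ≤ 2 * v r ^ 2 + 2 * ε * J := by
    intro r hr
    have e := intervalIntegral.integral_eq_sub_of_hasDerivAt (f := v) (f' := v') (a := y) (b := r)
      (fun y _ => hd y) (hc.intervalIntegrable _ _)
    have h1 : |v r - v y| ≤ ∫ s in y..(y + ε), |v' s| := by
      rw [← e]
      refine (intervalIntegral.abs_integral_le_integral_abs hr.1).trans ?_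
      exact intervalIntegral.integral_mono_interval le_rfl hr.1 hr.2
        (Filter.Eventually.of_forall fun y => abs_nonneg _) (hc.abs.intervalIntegrable _ _)
    have h2 := aux_cs v' hc y (y + ε) (by linarith)
    have h3 : (v r - v y) ^ 2 ≤ ε * J := by
      rw [← sq_abs]
      calc _ ≤ (∫ s in y..(y + ε), |v' s|) ^ 2 := by gcongr
        _ ≤ _ := h2
        _ = _ := by simp [J]
    nlinarith [sq_nonneg (v r + (v r - v y))]
  have := intervalIntegral.integral_mono_on (μ := volume) (a := y) (b := y + ε) (f := fun _ => v y ^ 2)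
    (g := fun r => 2 * v r ^ 2 + 2 * ε * J) (by linarith)
    (by apply Continuous.intervalIntegrable; fun_prop)
    (by apply Continuous.intervalIntegrable; fun_prop) key
  rw [intervalIntegral.integral_add (by apply Continuous.intervalIntegrable; fun_prop)
    (by apply Continuous.intervalIntegrable; fun_prop), intervalIntegral.integral_const_mul] at this
  simp only [intervalIntegral.integral_const, smul_eq_mul] at this
  calc ε * v y ^ 2 = (y + ε - y) * v y ^ 2 := by ring
    _ ≤ _ := this
    _ = _ := by ring

/-- The half-open lattice cell. -/
def cellQ (ε : ℝ) (j : ℤ × ℤ) : Set (ℝ × ℝ) :=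
  Set.Ioc (ε * j.1) (ε * j.1 + ε) ×ˢ Set.Ioc (ε * j.2) (ε * j.2 + ε)

lemma cell_eq (h : ℝ × ℝ → ℝ) (hh : Continuous h) (a b c d : ℝ) (hab : a ≤ b) (hcd : c ≤ d) :
    ∫ s in a..b, ∫ r in c..d, h (s, r) = ∫ X in Set.Ioc a b ×ˢ Set.Ioc c d, h X := by
  rw [Measure.volume_eq_prod, setIntegral_prod]
  · rw [intervalIntegral.integral_of_le hab]
    simp_rw [intervalIntegral.integral_of_le hcd]
  · exact (hh.continuousOn.integrableOn_compact (isCompact_Icc.prod isCompact_Icc)).mono_set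
      (Set.prod_mono Set.Ioc_subset_Icc_self Set.Ioc_subset_Icc_self)

lemma aux_cell (f0 f1 f2 f3 f4 g : ℝ → ℝ → ℝ)
    (h0 : ∀ x y, HasDerivAt (fun s => f0 s y) (f1 x y) x)
    (h1 : ∀ x y, HasDerivAt (fun s => f1 s y) (f2 x y) x)
    (h2 : ∀ x y, HasDerivAt (fun s => f2 s y) (f3 x y) x)
    (h3 : ∀ x y, HasDerivAt (fun s => f3 s y) (f4 x y) x)
    (h4 : ∀ x y, HasDerivAt (fun s => f4 x s) (g x y) y)
    (c4 : Continuous fun p : ℝ × ℝ => f4 p.1 p.2) (cg : Continuous fun p : ℝ × ℝ => g p.1 p.2)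
    (ε : ℝ) (hε : 0 < ε) (hε1 : ε ≤ 1) (x y : ℝ) :
    (f0 (x + ε) y + f0 (x - ε) y - 2 * f0 x y - ε ^ 2 * f2 x y) ^ 2
      ≤ 4 * ε ^ 6 * ∫ s in (x - ε)..(x + ε), ∫ r in y..(y + ε), (f4 s r ^ 2 + g s r ^ 2) := by
  have c4' : Continuous fun s => f4 s y := c4.comp (by fun_prop : Continuous fun s => (s, y))
  have c4s : ∀ s, Continuous fun r => f4 s r := fun s =>
    c4.comp (by fun_prop : Continuous fun r => (s, r))
  have cgs : ∀ s, Continuous fun r => g s r := fun s =>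
    cg.comp (by fun_prop : Continuous fun r => (s, r))
  have T := aux_taylor (fun s => f0 s y) (fun s => f1 s y) (fun s => f2 s y) (fun s => f3 s y)
    (fun s => f4 s y) (fun s => h0 s y) (fun s => h1 s y) (fun s => h2 s y) (fun s => h3 s y)
    c4' x ε hε
  have CS := aux_cs (fun s => f4 s y) c4' (x - ε) (x + ε) (by linarith)
  have cH : Continuous fun p : ℝ × ℝ => f4 p.1 p.2 ^ 2 + g p.1 p.2 ^ 2 := by fun_prop
  have cI : Continuous fun s => ∫ r in y..(y + ε), (f4 s r ^ 2 + g s r ^ 2) :=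
    intervalIntegral.continuous_parametric_intervalIntegral_of_continuous' cH y (y + ε)
  have TR : ∀ s, ε * f4 s y ^ 2 ≤ 2 * ∫ r in y..(y + ε), (f4 s r ^ 2 + g s r ^ 2) := by
    intro s
    have := aux_trace (fun r => f4 s r) (fun r => g s r) (fun r => h4 s r) (cgs s) y ε hε
    rw [intervalIntegral.integral_add]
    · have hn : 0 ≤ ∫ r in y..(y + ε), g s r ^ 2 :=
        intervalIntegral.integral_nonneg (by linarith) fun s _ => sq_nonneg _
      have : ε ^ 2 * ∫ r in y..(y + ε), g s r ^ 2 ≤ 1 * ∫ r in y..(y + ε), g s r ^ 2 :=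
        mul_le_mul_of_nonneg_right (by nlinarith) hn
      linarith
    · exact ((c4s s).pow 2).intervalIntegrable _ _
    · exact ((cgs s).pow 2).intervalIntegrable _ _
  have I1 := intervalIntegral.integral_mono_on (μ := volume) (a := x - ε) (b := x + ε)
    (f := fun s => ε * f4 s y ^ 2)
    (g := fun s => 2 * ∫ r in y..(y + ε), (f4 s r ^ 2 + g s r ^ 2)) (by linarith)
    (by apply Continuous.intervalIntegrable; fun_prop)
    (by apply Continuous.intervalIntegrable; fun_prop) (fun s _ => TR s)
  rw [intervalIntegral.integral_const_mul, intervalIntegral.integral_const_mul] at I1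
  rw [← sq_abs]
  calc _ ≤ (ε ^ 3 * ∫ s in (x - ε)..(x + ε), |f4 s y|) ^ 2 := by
        gcongr
    _ = ε ^ 6 * (∫ s in (x - ε)..(x + ε), |f4 s y|) ^ 2 := by ring
    _ ≤ ε ^ 6 * ((x + ε - (x - ε)) * ∫ s in (x - ε)..(x + ε), f4 s y ^ 2) := by gcongr
    _ = ε ^ 6 * (2 * (ε * ∫ s in (x - ε)..(x + ε), f4 s y ^ 2)) := by ring
    _ ≤ ε ^ 6 * (2 * (2 * ∫ s in (x - ε)..(x + ε),
          ∫ r in y..(y + ε), (f4 s r ^ 2 + g s r ^ 2))) := by gcongr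
    _ = _ := by ring

lemma cell_disj (ε : ℝ) (hε : 0 < ε) : Pairwise (Function.onFun Disjoint (cellQ ε)) := by
  have key : ∀ (a b : ℤ) (x : ℝ), ε * a < x → x ≤ ε * a + ε → ε * b < x → x ≤ ε * b + ε →
      a ≤ b := by
    intro a b x h1 _ _ h4
    by_contra h
    have : (b : ℝ) + 1 ≤ a := by exact_mod_cast not_le.1 h
    nlinarith
  intro j k hjk
  rw [Function.onFun, Set.disjoint_left]
  rintro X ⟨h1, h2⟩ ⟨h3, h4⟩
  exact hjk (Prod.ext
    (le_antisymm (key _ _ _ h1.1 h1.2 h3.1 h3.2) (key _ _ _ h3.1 h3.2 h1.1 h1.2))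
    (le_antisymm (key _ _ _ h2.1 h2.2 h4.1 h4.2) (key _ _ _ h4.1 h4.2 h2.1 h2.2)))

lemma cell_sum (h : ℝ × ℝ → ℝ) (hh : Continuous h) (hn : ∀ X, 0 ≤ h X) (A : ℝ)
    (hA : ∀ K : Set (ℝ × ℝ), IsCompact K → ∫ X in K, h X ≤ A) (ε : ℝ) (hε : 0 < ε)
    (s : Finset (ℤ × ℤ)) : ∑ j ∈ s, ∫ X in cellQ ε j, h X ≤ A := by
  have hcK : IsCompact (⋃ j ∈ s, (Set.Icc (ε * j.1) (ε * j.1 + ε) ×ˢ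
      Set.Icc (ε * j.2) (ε * j.2 + ε) : Set (ℝ × ℝ))) :=
    s.isCompact_biUnion fun j _ => isCompact_Icc.prod isCompact_Icc
  have hsub : (⋃ j ∈ s, cellQ ε j) ⊆ (⋃ j ∈ s, (Set.Icc (ε * j.1) (ε * j.1 + ε) ×ˢ
      Set.Icc (ε * j.2) (ε * j.2 + ε) : Set (ℝ × ℝ))) :=
    Set.iUnion₂_mono fun j _ => Set.prod_mono Set.Ioc_subset_Icc_self Set.Ioc_subset_Icc_self
  have hi := hh.continuousOn.integrableOn_compact (μ := volume) hcK
  rw [← integral_biUnion_finset]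
  · exact (setIntegral_mono_set hi (Filter.Eventually.of_forall hn) hsub.eventuallyLE).trans
      (hA _ hcK)
  · intro j _; exact measurableSet_Ioc.prod measurableSet_Ioc
  · exact fun j _ k _ hjk => cell_disj ε hε hjk
  · intro j hj
    exact hi.mono_set ((Set.subset_biUnion_of_mem (u := fun j => cellQ ε j) hj).trans hsub)

lemma lattice_bound (f0 f1 f2 f3 f4 g : ℝ → ℝ → ℝ)
    (h0 : ∀ x y, HasDerivAt (fun s => f0 s y) (f1 x y) x)
    (h1 : ∀ x y, HasDerivAt (fun s => f1 s y) (f2 x y) x)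
    (h2 : ∀ x y, HasDerivAt (fun s => f2 s y) (f3 x y) x)
    (h3 : ∀ x y, HasDerivAt (fun s => f3 s y) (f4 x y) x)
    (h4 : ∀ x y, HasDerivAt (fun s => f4 x s) (g x y) y)
    (c4 : Continuous fun p : ℝ × ℝ => f4 p.1 p.2) (cg : Continuous fun p : ℝ × ℝ => g p.1 p.2)
    (A : ℝ) (hA : ∀ K : Set (ℝ × ℝ), IsCompact K →
      ∫ X in K, (f4 X.1 X.2 ^ 2 + g X.1 X.2 ^ 2) ≤ A)
    (ε : ℝ) (hε : 0 < ε) (hε1 : ε ≤ 1) (s : Finset (ℤ × ℤ)) :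
    ∑ j ∈ s, (f0 (ε * j.1 + ε) (ε * j.2) + f0 (ε * j.1 - ε) (ε * j.2)
      - 2 * f0 (ε * j.1) (ε * j.2) - ε ^ 2 * f2 (ε * j.1) (ε * j.2)) ^ 2 ≤ 8 * ε ^ 6 * A := by
  have cH : Continuous fun p : ℝ × ℝ => f4 p.1 p.2 ^ 2 + g p.1 p.2 ^ 2 := by fun_prop
  have S := cell_sum _ cH (fun X => by positivity) A hA ε hε
  have B : ∀ j : ℤ × ℤ, (f0 (ε * j.1 + ε) (ε * j.2) + f0 (ε * j.1 - ε) (ε * j.2)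
      - 2 * f0 (ε * j.1) (ε * j.2) - ε ^ 2 * f2 (ε * j.1) (ε * j.2)) ^ 2 ≤
      4 * ε ^ 6 * ((∫ X in cellQ ε (j - (1, 0)), (f4 X.1 X.2 ^ 2 + g X.1 X.2 ^ 2)) +
        ∫ X in cellQ ε j, (f4 X.1 X.2 ^ 2 + g X.1 X.2 ^ 2)) := by
    intro j
    refine (aux_cell f0 f1 f2 f3 f4 g h0 h1 h2 h3 h4 c4 cg ε hε hε1 _ _).trans (le_of_eq ?_)
    have cI : Continuous fun s => ∫ r in (ε * (j.2:ℝ))..(ε * j.2 + ε), (f4 s r ^ 2 + g s r ^ 2) :=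
      intervalIntegral.continuous_parametric_intervalIntegral_of_continuous' cH _ _
    rw [← intervalIntegral.integral_add_adjacent_intervals (b := ε * (j.1:ℝ))
      (cI.intervalIntegrable _ _) (cI.intervalIntegrable _ _)]
    rw [cell_eq (fun p => f4 p.1 p.2 ^ 2 + g p.1 p.2 ^ 2) cH _ _ _ _ (by linarith) (by linarith),
      cell_eq (fun p => f4 p.1 p.2 ^ 2 + g p.1 p.2 ^ 2) cH _ _ _ _ (by linarith) (by linarith)]
    have : cellQ ε (j - (1, 0)) = Set.Ioc (ε * j.1 - ε) (ε * j.1) ×ˢ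
        Set.Ioc (ε * j.2) (ε * j.2 + ε) := by
      simp only [cellQ, Prod.fst_sub, Prod.snd_sub, Int.cast_sub, Int.cast_one, sub_zero]
      congr 2 <;> ring
    rw [this]
    rfl
  calc _ ≤ ∑ j ∈ s, 4 * ε ^ 6 * ((∫ X in cellQ ε (j - (1, 0)),
        (f4 X.1 X.2 ^ 2 + g X.1 X.2 ^ 2)) +
        ∫ X in cellQ ε j, (f4 X.1 X.2 ^ 2 + g X.1 X.2 ^ 2)) := Finset.sum_le_sum fun j _ => B j
    _ = 4 * ε ^ 6 * (∑ j ∈ s.map (Equiv.subRight ((1:ℤ), (0:ℤ))).toEmbedding, (∫ X in cellQ ε j,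
        (f4 X.1 X.2 ^ 2 + g X.1 X.2 ^ 2)) +
        ∑ j ∈ s, ∫ X in cellQ ε j, (f4 X.1 X.2 ^ 2 + g X.1 X.2 ^ 2)) := by
      rw [← Finset.mul_sum, Finset.sum_add_distrib, Finset.sum_map]; rfl
    _ ≤ 4 * ε ^ 6 * (A + A) := by
      gcongr
      · exact S _
      · exact S _
    _ = _ := by ring

/-- Directional derivative. -/
def DD {E : Type*} [NormedAddCommGroup E] [NormedSpace ℝ E] (v : E) (F : E → ℝ) (p : E) : ℝ :=
  fderiv ℝ F p v

abbrev PP := (ℝ × ℝ) × ℝ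
abbrev eX : PP := ((1, 0), 0)
abbrev eY : PP := ((0, 1), 0)
abbrev eT : PP := ((0, 0), 1)

lemma DD_smooth {E : Type*} [NormedAddCommGroup E] [NormedSpace ℝ E] (v : E) {F : E → ℝ}
    (hF : ContDiff ℝ (⊤ : ℕ∞) F) : ContDiff ℝ (⊤ : ℕ∞) (DD v F) :=
  (hF.fderiv_right (m := (⊤ : ℕ∞)) (by exact_mod_cast le_top)).clm_apply contDiff_const

lemma smooth_diff {E : Type*} [NormedAddCommGroup E] [NormedSpace ℝ E] {F : E → ℝ}
    (hF : ContDiff ℝ (⊤ : ℕ∞) F) : Differentiable ℝ F :=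
  hF.differentiable (by simp)

lemma DD_comm {E : Type*} [NormedAddCommGroup E] [NormedSpace ℝ E] (v w : E) {F : E → ℝ}
    (hF : ContDiff ℝ (⊤ : ℕ∞) F) : DD v (DD w F) = DD w (DD v F) := by
  have hd : Differentiable ℝ (fderiv ℝ F) :=
    (hF.fderiv_right (m := (⊤ : ℕ∞)) (by exact_mod_cast le_top)).differentiable (by simp)
  have key : ∀ (v w : E) p, DD v (DD w F) p = fderiv ℝ (fderiv ℝ F) p v w := by
    intro v w p
    have := ((hd p).hasFDerivAt.clm_apply (hasFDerivAt_const w p)).fderiv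
    change fderiv ℝ (fun y => (fderiv ℝ F y) w) p v = _
    rw [this]
    simp
  ext p
  rw [key, key]
  exact second_derivative_symmetric (fun y => (smooth_diff hF y).hasFDerivAt)
    (hd p).hasFDerivAt v w

lemma DD_mul {E : Type*} [NormedAddCommGroup E] [NormedSpace ℝ E] (v : E) {F G : E → ℝ}
    (hF : Differentiable ℝ F) (hG : Differentiable ℝ G) (p : E) :
    DD v (fun q => F q * G q) p = F p * DD v G p + G p * DD v F p := by
  simp only [DD]
  rw [fderiv_fun_mul (hF p) (hG p)]
  simp

lemma slice_X {F : PP → ℝ} (hF : Differentiable ℝ F) (x y τ : ℝ) :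
    HasDerivAt (fun s => F ((s, y), τ)) (DD eX F ((x, y), τ)) x :=
  (hF ((x, y), τ)).hasFDerivAt.comp_hasDerivAt x
    (((hasDerivAt_id x).prodMk (hasDerivAt_const x y)).prodMk (hasDerivAt_const x τ))

lemma slice_Y {F : PP → ℝ} (hF : Differentiable ℝ F) (x y τ : ℝ) :
    HasDerivAt (fun s => F ((x, s), τ)) (DD eY F ((x, y), τ)) y :=
  (hF ((x, y), τ)).hasFDerivAt.comp_hasDerivAt y
    (((hasDerivAt_const y x).prodMk (hasDerivAt_id y)).prodMk (hasDerivAt_const y τ))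

lemma slice_T {F : PP → ℝ} (hF : Differentiable ℝ F) (X : ℝ × ℝ) (τ : ℝ) :
    HasDerivAt (fun s => F (X, s)) (DD eT F (X, τ)) τ :=
  (hF (X, τ)).hasFDerivAt.comp_hasDerivAt τ
    ((hasDerivAt_const τ X).prodMk (hasDerivAt_id τ))

lemma slice_S {F : PP → ℝ} (hF : Differentiable ℝ F) (v X : ℝ × ℝ) (τ : ℝ) :
    DD v (fun Y => F (Y, τ)) X = DD (v, 0) F (X, τ) := by
  have h := HasFDerivAt.comp (f := fun Y : ℝ × ℝ => (Y, τ)) X (hF (X, τ)).hasFDerivAt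
    ((hasFDerivAt_id (𝕜 := ℝ) X).prodMk (hasFDerivAt_const τ X))
  have h2 : fderiv ℝ (fun Y => F (Y, τ)) X = _ := h.fderiv
  simp only [DD]
  rw [h2]
  simp

lemma deriv_set_int (G : PP → ℝ) (hG : ContDiff ℝ (⊤ : ℕ∞) G) (K : Set (ℝ × ℝ))
    (hK : IsCompact K) (τ : ℝ) :
    HasDerivAt (fun s => ∫ X in K, G (X, s)) (∫ X in K, DD eT G (X, τ)) τ := by
  have hc : Continuous (DD eT G) := (DD_smooth eT hG).continuous
  obtain ⟨C, hC⟩ := (hK.prod (isCompact_closedBall τ 1)).exists_bound_of_continuousOn hc.continuousOn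
  have hKf : IsFiniteMeasure ((volume : Measure (ℝ × ℝ)).restrict K) :=
    ⟨by rw [Measure.restrict_apply_univ]; exact hK.measure_lt_top⟩
  have cs : ∀ s : ℝ, Continuous fun X : ℝ × ℝ => G (X, s) := fun s =>
    hG.continuous.comp (by fun_prop)
  refine (hasDerivAt_integral_of_dominated_loc_of_deriv_le (bound := fun _ => C)
    (F := fun s X => G (X, s)) (F' := fun s X => DD eT G (X, s))
    (Metric.closedBall_mem_nhds τ one_pos) ?_ ?_ ?_ ?_ ?_ ?_).2
  · exact Filter.Eventually.of_forall fun s => (cs s).aestronglyMeasurable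
  · exact (cs τ).continuousOn.integrableOn_compact hK
  · exact (hc.comp (by fun_prop : Continuous fun X : ℝ × ℝ => (X, τ))).aestronglyMeasurable
  · refine (ae_restrict_iff' hK.measurableSet).2 (Filter.Eventually.of_forall fun X hX s hs => ?_)
    exact hC (X, s) ⟨hX, hs⟩
  · exact integrable_const C
  · exact Filter.Eventually.of_forall fun X s _ => slice_T (smooth_diff hG) X s

/-- Japanese bracket. -/
def rho (X : ℝ × ℝ) : ℝ := Real.sqrt (1 + X.1 ^ 2 + X.2 ^ 2)

lemma rho_pos (X : ℝ × ℝ) : 0 < rho X := Real.sqrt_pos.2 (by positivity)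
lemma rho_sq (X : ℝ × ℝ) : rho X ^ 2 = 1 + X.1 ^ 2 + X.2 ^ 2 := Real.sq_sqrt (by positivity)
lemma rho_smooth : ContDiff ℝ (⊤ : ℕ∞) rho :=
  ContDiff.sqrt (by fun_prop) (fun X => by positivity)
lemma norm_le_rho (X : ℝ × ℝ) : ‖X‖ ≤ rho X := by
  rw [Prod.norm_def, max_le_iff, Real.norm_eq_abs, Real.norm_eq_abs]
  constructor <;> refine abs_le_of_sq_le_sq ?_ (rho_pos X).le <;> rw [rho_sq] <;> nlinarith

/-- Space-time weight. -/
def wt (R k : ℝ) (p : PP) : ℝ := Real.smoothTransition (R - k * p.2 - rho p.1)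
def wt' (R k : ℝ) (p : PP) : ℝ := deriv Real.smoothTransition (R - k * p.2 - rho p.1)

lemma wt_smooth (R k : ℝ) : ContDiff ℝ (⊤ : ℕ∞) (wt R k) := by
  have h : ContDiff ℝ (⊤ : ℕ∞) fun p : PP => R - k * p.2 - rho p.1 :=
    (contDiff_const.sub (contDiff_const.mul contDiff_snd)).sub (rho_smooth.comp contDiff_fst)
  exact (Real.smoothTransition.contDiff (n := ⊤)).comp h

lemma wt'_cont (R k : ℝ) : Continuous (wt' R k) := by
  have h : Continuous fun p : PP => R - k * p.2 - rho p.1 :=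
    (continuous_const.sub (continuous_const.mul continuous_snd)).sub
      (rho_smooth.continuous.comp continuous_fst)
  exact ((Real.smoothTransition.contDiff (n := ⊤)).continuous_deriv (by simp)).comp h

lemma wt'_nonneg (R k : ℝ) (p : PP) : 0 ≤ wt' R k p := Real.smoothTransition.monotone.deriv_nonneg

lemma wt_T (R k : ℝ) (p : PP) : DD eT (wt R k) p = - k * wt' R k p := by
  obtain ⟨X, τ⟩ := p
  refine (slice_T (smooth_diff (wt_smooth R k)) X τ).unique ?_
  have h1 : HasDerivAt (fun s => R - k * s - rho X) (-k) τ := by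
    exact ((((hasDerivAt_id τ).const_mul k).const_sub R).sub_const (rho X)).congr_deriv (by ring)
  have := ((Real.smoothTransition.contDiff (n := ⊤)).differentiable (by simp)
    (R - k * τ - rho X)).hasDerivAt.comp τ h1
  exact this.congr_deriv (by rw [wt']; ring)

lemma wt_X (R k : ℝ) (p : PP) : DD eX (wt R k) p = - (p.1.1 / rho p.1) * wt' R k p := by
  obtain ⟨⟨x, y⟩, τ⟩ := p
  refine (slice_X (smooth_diff (wt_smooth R k)) x y τ).unique ?_
  have h0 : HasDerivAt (fun s => rho (s, y)) (x / rho (x, y)) x := by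
    have := ((((hasDerivAt_pow 2 x).const_add 1).add_const (y ^ 2))).sqrt (by positivity)
    refine this.congr_deriv ?_
    simp [rho]; ring
  have := ((Real.smoothTransition.contDiff (n := ⊤)).differentiable (by simp)
    (R - k * τ - rho (x, y))).hasDerivAt.comp x (h0.const_sub (R - k * τ))
  exact this.congr_deriv (by rw [wt']; ring)

lemma wt_Y (R k : ℝ) (p : PP) : DD eY (wt R k) p = - (p.1.2 / rho p.1) * wt' R k p := by
  obtain ⟨⟨x, y⟩, τ⟩ := p
  refine (slice_Y (smooth_diff (wt_smooth R k)) x y τ).unique ?_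
  have h0 : HasDerivAt (fun s => rho (x, s)) (y / rho (x, y)) y := by
    have := ((hasDerivAt_pow 2 y).const_add (1 + x ^ 2)).sqrt (by positivity)
    refine this.congr_deriv ?_
    simp [rho]; ring
  have := ((Real.smoothTransition.contDiff (n := ⊤)).differentiable (by simp)
    (R - k * τ - rho (x, y))).hasDerivAt.comp y (h0.const_sub (R - k * τ))
  exact this.congr_deriv (by rw [wt']; ring)

lemma wt_zero (R k : ℝ) (hk : 0 ≤ k) (X : ℝ × ℝ) (τ : ℝ) (hτ : 0 ≤ τ)
    (hX : X ∉ Metric.closedBall (0 : ℝ × ℝ) R) : wt R k (X, τ) = 0 ∧ wt' R k (X, τ) = 0 := by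
  have h1 : R < ‖X‖ := by simpa using hX
  have h2 := norm_le_rho X
  have h3 : R - k * τ - rho X ≤ 0 := by nlinarith [mul_nonneg hk hτ]
  have h4 := Real.smoothTransition.zero_of_nonpos h3
  refine ⟨h4, IsLocalMin.deriv_eq_zero (Filter.Eventually.of_forall fun s => ?_)⟩
  simp only
  rw [h4]; exact Real.smoothTransition.nonneg s

lemma energy_alg (m k a b c p q w : ℝ) (hm : 0 < m) (hk : k = 1 + 1 / m) (hw : 0 ≤ w)
    (hp : |p| ≤ 1) (hq : |q| ≤ 1) :
    -k * w * (m * a ^ 2 + b ^ 2 + c ^ 2) + 2 * (p * w * (a * b)) + 2 * (q * w * (a * c)) ≤ 0 := by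
  have hmk : k * m = m + 1 := by rw [hk]; field_simp
  have hk1 : 1 < k := by rw [hk]; have : 0 < 1 / m := by positivity
                         linarith
  have hkk : 2 ≤ k * (k * m) := by
    rw [hmk, hk]; have : 0 < 1 / m := by positivity
    have h2 : m * (1 / m) = 1 := by field_simp
    nlinarith [sq_nonneg (m - 1), sq_nonneg (m - 1 / m)]
  have key : ∀ p b : ℝ, |p| ≤ 1 → 2 * (p * (a * b)) ≤ k * m / 2 * a ^ 2 + k * b ^ 2 := by
    intro p b hp
    have h1 : p ^ 2 ≤ 1 := (sq_le_one_iff_abs_le_one p).2 hp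
    have h2 : 0 ≤ k * (k * m / 2 * a ^ 2 + k * b ^ 2 - 2 * (p * (a * b))) := by
      nlinarith [sq_nonneg (k * b - p * a), mul_nonneg (sub_nonneg.2 h1) (sq_nonneg a),
        mul_nonneg (sub_nonneg.2 hkk) (sq_nonneg a)]
    have := nonneg_of_mul_nonneg_right h2 (by linarith)
    linarith
  nlinarith [mul_le_mul_of_nonneg_left (key p b hp) hw, mul_le_mul_of_nonneg_left (key q c hq) hw]

/-- Energy density. -/
def en (m : ℝ) (F : PP → ℝ) (p : PP) : ℝ := m * DD eT F p ^ 2 + DD eX F p ^ 2 + DD eY F p ^ 2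

lemma en_smooth (m : ℝ) {F : PP → ℝ} (hF : ContDiff ℝ (⊤ : ℕ∞) F) :
    ContDiff ℝ (⊤ : ℕ∞) (en m F) := by
  have := DD_smooth eT hF; have := DD_smooth eX hF; have := DD_smooth eY hF
  unfold en; fun_prop

lemma ibp (w g : PP → ℝ) (hw : ContDiff ℝ (⊤ : ℕ∞) w) (hg : ContDiff ℝ (⊤ : ℕ∞) g)
    (v : ℝ × ℝ) (K : Set (ℝ × ℝ)) (hK : IsCompact K) (τ : ℝ)
    (h0 : ∀ X ∉ K, w (X, τ) = 0) (h1 : ∀ X ∉ K, DD (v, 0) w (X, τ) = 0) :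
    ∫ X, w (X, τ) * DD (v, 0) g (X, τ) = - ∫ X, DD (v, 0) w (X, τ) * g (X, τ) := by
  have cs : Continuous fun X : ℝ × ℝ => (X, τ) := by fun_prop
  have cw := hw.continuous.comp cs
  have cg := hg.continuous.comp cs
  have cw' := (DD_smooth (v, 0) hw).continuous.comp cs
  have cg' := (DD_smooth (v, 0) hg).continuous.comp cs
  have := integral_mul_fderiv_eq_neg_fderiv_mul_of_integrable (μ := (volume : Measure (ℝ × ℝ)))
    (f := fun X => w (X, τ)) (g := fun X => g (X, τ)) (v := v)
  have sw : ∀ X, fderiv ℝ (fun X => w (X, τ)) X v = DD (v, 0) w (X, τ) := fun X =>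
    slice_S (smooth_diff hw) v X τ
  have sg : ∀ X, fderiv ℝ (fun X => g (X, τ)) X v = DD (v, 0) g (X, τ) := fun X =>
    slice_S (smooth_diff hg) v X τ
  simp_rw [sw, sg] at this
  refine this ?_ ?_ ?_ ?_ ?_
  · exact (cw'.mul cg).integrable_of_hasCompactSupport
      (HasCompactSupport.intro hK fun X hX => by simp [h1 X hX])
  · exact (cw.mul cg').integrable_of_hasCompactSupport
      (HasCompactSupport.intro hK fun X hX => by simp [h0 X hX])
  · exact (cw.mul cg).integrable_of_hasCompactSupport
      (HasCompactSupport.intro hK fun X hX => by simp [h0 X hX])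
  · exact fun X _ => (smooth_diff hw (X, τ)).comp X (by fun_prop)
  · exact fun X _ => (smooth_diff hg (X, τ)).comp X (by fun_prop)

lemma en_T (m : ℝ) {F : PP → ℝ} (hF : ContDiff ℝ (⊤ : ℕ∞) F)
    (hw : ∀ p, m * DD eT (DD eT F) p = DD eX (DD eX F) p + DD eY (DD eY F) p) (p : PP) :
    DD eT (en m F) p = 2 * DD eX (fun q => DD eT F q * DD eX F q) p +
      2 * DD eY (fun q => DD eT F q * DD eY F q) p := by
  have sT := DD_smooth eT hF
  have sX := DD_smooth eX hF
  have sY := DD_smooth eY hF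
  have dT := smooth_diff sT
  have dX := smooth_diff sX
  have dY := smooth_diff sY
  rw [DD_mul _ dT dX, DD_mul _ dT dY]
  have e : DD eT (en m F) p = 2 * (m * DD eT (DD eT F) p) * DD eT F p +
      2 * DD eX F p * DD eT (DD eX F) p + 2 * DD eY F p * DD eT (DD eY F) p := by
    obtain ⟨X, τ⟩ := p
    refine (slice_T (smooth_diff (en_smooth m hF)) X τ).unique ?_
    have := ((((slice_T dT X τ).pow 2).const_mul m).add ((slice_T dX X τ).pow 2)).add
      ((slice_T dY X τ).pow 2)
    exact this.congr_deriv (by simp; ring)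
  rw [e, hw, DD_comm eT eX hF, DD_comm eT eY hF]
  ring

lemma energy_deriv (m k R : ℝ) (hm : 0 < m) (hk : k = 1 + 1 / m) {F : PP → ℝ}
    (hF : ContDiff ℝ (⊤ : ℕ∞) F)
    (hw : ∀ p, m * DD eT (DD eT F) p = DD eX (DD eX F) p + DD eY (DD eY F) p)
    (τ : ℝ) (hτ : 0 ≤ τ) :
    ∫ X in Metric.closedBall (0 : ℝ × ℝ) R, DD eT (fun q => wt R k q * en m F q) (X, τ) ≤ 0 := by
  have hk0 : 0 ≤ k := by rw [hk]; positivity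
  set K := Metric.closedBall (0 : ℝ × ℝ) R
  have hK : IsCompact K := isCompact_closedBall _ _
  have z := fun X hX => wt_zero R k hk0 X τ hτ hX
  have ws := wt_smooth R k
  have es := en_smooth m hF
  have sT := DD_smooth eT hF
  have sX := DD_smooth eX hF
  have sY := DD_smooth eY hF
  set P : PP → ℝ := fun q => DD eT F q * DD eX F q with hP
  set Q : PP → ℝ := fun q => DD eT F q * DD eY F q with hQ
  have sP : ContDiff ℝ (⊤ : ℕ∞) P := sT.mul sX
  have sQ : ContDiff ℝ (⊤ : ℕ∞) Q := sT.mul sY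
  have cs : Continuous fun X : ℝ × ℝ => (X, τ) := by fun_prop
  have e1 : ∀ X, DD eT (fun q => wt R k q * en m F q) (X, τ) =
      -k * wt' R k (X, τ) * en m F (X, τ) + 2 * (wt R k (X, τ) * DD eX P (X, τ)) +
        2 * (wt R k (X, τ) * DD eY Q (X, τ)) := by
    intro X
    rw [DD_mul _ (smooth_diff ws) (smooth_diff es), en_T m hF hw, wt_T]
    ring
  have i1 : Integrable fun X => -k * wt' R k (X, τ) * en m F (X, τ) :=
    Continuous.integrable_of_hasCompactSupport
      ((continuous_const.mul ((wt'_cont R k).comp cs)).mul (es.continuous.comp cs))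
      (HasCompactSupport.intro hK fun X hX => by simp [(z X hX).2])
  have i2 : Integrable fun X => 2 * (wt R k (X, τ) * DD eX P (X, τ)) :=
    Continuous.integrable_of_hasCompactSupport
      (continuous_const.mul ((ws.continuous.comp cs).mul ((DD_smooth eX sP).continuous.comp cs)))
      (HasCompactSupport.intro hK fun X hX => by simp [(z X hX).1])
  have i3 : Integrable fun X => 2 * (wt R k (X, τ) * DD eY Q (X, τ)) :=
    Continuous.integrable_of_hasCompactSupport
      (continuous_const.mul ((ws.continuous.comp cs).mul ((DD_smooth eY sQ).continuous.comp cs)))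
      (HasCompactSupport.intro hK fun X hX => by simp [(z X hX).1])
  have j2 : Integrable fun X => DD eX (wt R k) (X, τ) * P (X, τ) :=
    Continuous.integrable_of_hasCompactSupport
      (((DD_smooth eX ws).continuous.comp cs).mul (sP.continuous.comp cs))
      (HasCompactSupport.intro hK fun X hX => by simp [wt_X, (z X hX).2])
  have j3 : Integrable fun X => DD eY (wt R k) (X, τ) * Q (X, τ) :=
    Continuous.integrable_of_hasCompactSupport
      (((DD_smooth eY ws).continuous.comp cs).mul (sQ.continuous.comp cs))
      (HasCompactSupport.intro hK fun X hX => by simp [wt_Y, (z X hX).2])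
  have B1 := ibp (wt R k) P ws sP (1, 0) K hK τ (fun X hX => (z X hX).1)
    (fun X hX => by rw [wt_X]; simp [(z X hX).2])
  have B2 := ibp (wt R k) Q ws sQ (0, 1) K hK τ (fun X hX => (z X hX).1)
    (fun X hX => by rw [wt_Y]; simp [(z X hX).2])
  rw [setIntegral_eq_integral_of_forall_compl_eq_zero
    (fun X hX => by rw [e1]; simp [z X hX])]
  simp_rw [e1]
  rw [integral_add (by exact i1.add i2) i3, integral_add i1 i2, integral_const_mul, integral_const_mul,
    B1, B2]
  have : (∫ X, -k * wt' R k (X, τ) * en m F (X, τ)) +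
      2 * -(∫ X, DD eX (wt R k) (X, τ) * P (X, τ)) +
      2 * -(∫ X, DD eY (wt R k) (X, τ) * Q (X, τ)) =
      ∫ X, (-k * wt' R k (X, τ) * en m F (X, τ) + (-2) * (DD eX (wt R k) (X, τ) * P (X, τ)) +
        (-2) * (DD eY (wt R k) (X, τ) * Q (X, τ))) := by
    rw [integral_add (by exact i1.add (j2.const_mul (-2))) (j3.const_mul (-2)),
      integral_add i1 (j2.const_mul (-2)), integral_const_mul, integral_const_mul]
    ring
  refine this.le.trans (integral_nonpos fun X => ?_)
  simp only [Pi.zero_apply]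
  have hr : ∀ x : ℝ, |x| ≤ ‖X‖ → |x / rho X| ≤ 1 := by
    intro x hx
    rw [abs_div, abs_of_pos (rho_pos X)]
    exact div_le_one_of_le₀ (hx.trans (norm_le_rho X)) (rho_pos X).le
  have := energy_alg m k (DD eT F (X, τ)) (DD eX F (X, τ)) (DD eY F (X, τ)) (X.1 / rho X)
    (X.2 / rho X) (wt' R k (X, τ)) hm hk (wt'_nonneg _ _ _) (hr _ (norm_fst_le X))
    (hr _ (norm_snd_le X))
  rw [wt_X, wt_Y]
  simp only [hP, hQ, en]
  linarith

lemma energy_pos (m : ℝ) (hm : 0 < m) {F : PP → ℝ} (hF : ContDiff ℝ (⊤ : ℕ∞) F)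
    (hw : ∀ p, m * DD eT (DD eT F) p = DD eX (DD eX F) p + DD eY (DD eY F) p)
    (hi : Integrable fun X => en m F (X, 0)) (T : ℝ) (hT : 0 ≤ T)
    (K' : Set (ℝ × ℝ)) (hK' : IsCompact K') :
    ∫ X in K', en m F (X, T) ≤ ∫ X, en m F (X, 0) := by
  obtain ⟨k, hk⟩ : ∃ k, k = 1 + 1 / m := ⟨_, rfl⟩
  have hk0 : 0 ≤ k := by rw [hk]; positivity
  obtain ⟨C, hC⟩ := hK'.exists_bound_of_continuousOn rho_smooth.continuous.continuousOn
  obtain ⟨R, hR⟩ : ∃ R, R = C + k * T + 1 := ⟨_, rfl⟩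
  have hen : ∀ p, 0 ≤ en m F p := fun p => by unfold en; positivity
  have hsub : K' ⊆ Metric.closedBall (0 : ℝ × ℝ) R := by
    intro X hX
    have h1 := (le_abs_self _).trans (hC X hX)
    have h2 := norm_le_rho X
    rw [mem_closedBall_zero_iff]
    nlinarith [mul_nonneg hk0 hT]
  have hK : IsCompact (Metric.closedBall (0 : ℝ × ℝ) R) := isCompact_closedBall _ _
  have hG : ContDiff ℝ (⊤ : ℕ∞) fun q => wt R k q * en m F q :=
    (wt_smooth R k).mul (en_smooth m hF)
  have hder := deriv_set_int _ hG _ hK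
  have anti : AntitoneOn (fun s => ∫ X in Metric.closedBall (0 : ℝ × ℝ) R,
      wt R k (X, s) * en m F (X, s)) (Set.Ici 0) := by
    refine antitoneOn_of_deriv_nonpos (convex_Ici 0)
      (fun s _ => (hder s).continuousAt.continuousWithinAt)
      (fun s _ => (hder s).differentiableAt.differentiableWithinAt) (fun s hs => ?_)
    rw [(hder s).deriv]
    rw [interior_Ici] at hs
    exact energy_deriv m k R hm hk hF hw s (le_of_lt hs)
  have hmain := anti (Set.mem_Ici.2 le_rfl) (Set.mem_Ici.2 hT) hT
  simp only at hmain
  have cs : ∀ τ : ℝ, Continuous fun X : ℝ × ℝ => (X, τ) := fun τ => by fun_prop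
  have ci : ∀ τ, IntegrableOn (fun X => wt R k (X, τ) * en m F (X, τ))
      (Metric.closedBall (0 : ℝ × ℝ) R) := fun τ =>
    (hG.continuous.comp (cs τ)).continuousOn.integrableOn_compact hK
  calc ∫ X in K', en m F (X, T) = ∫ X in K', wt R k (X, T) * en m F (X, T) := by
        refine setIntegral_congr_fun hK'.measurableSet fun X hX => ?_
        have h1 := (le_abs_self _).trans (hC X hX)
        have : wt R k (X, T) = 1 := Real.smoothTransition.one_of_one_le (by
          simp only; linarith)
        simp only [this, one_mul]
    _ ≤ ∫ X in Metric.closedBall (0 : ℝ × ℝ) R, wt R k (X, T) * en m F (X, T) :=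
        setIntegral_mono_set (ci T) (Filter.Eventually.of_forall fun X =>
          mul_nonneg (Real.smoothTransition.nonneg _) (hen _)) hsub.eventuallyLE
    _ ≤ _ := hmain
    _ ≤ ∫ X in Metric.closedBall (0 : ℝ × ℝ) R, en m F (X, 0) := by
        refine setIntegral_mono (ci 0) hi.integrableOn fun X => ?_
        exact mul_le_of_le_one_left (hen _) (Real.smoothTransition.le_one _)
    _ ≤ _ := setIntegral_le_integral hi (Filter.Eventually.of_forall fun X => hen _)

/-- Smooth solutions of the wave equation. -/
def IsSol (m : ℝ) (F : PP → ℝ) : Prop :=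
  ContDiff ℝ (⊤ : ℕ∞) F ∧
    ∀ p, m * DD eT (DD eT F) p = DD eX (DD eX F) p + DD eY (DD eY F) p

lemma DD_add {E : Type*} [NormedAddCommGroup E] [NormedSpace ℝ E] (v : E) {F G : E → ℝ}
    (hF : Differentiable ℝ F) (hG : Differentiable ℝ G) (p : E) :
    DD v (fun q => F q + G q) p = DD v F p + DD v G p := by
  simp only [DD]
  rw [fderiv_fun_add (hF p) (hG p)]
  simp

lemma IsSol.dd {m : ℝ} {F : PP → ℝ} (h : IsSol m F) (v : PP) : IsSol m (DD v F) := by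
  obtain ⟨hF, hw⟩ := h
  refine ⟨DD_smooth v hF, fun p => ?_⟩
  have c : ∀ w, DD w (DD w (DD v F)) = DD v (DD w (DD w F)) := fun w => by
    rw [DD_comm w v hF, DD_comm w v (DD_smooth w hF)]
  rw [c, c, c]
  have e : (fun p => m * DD eT (DD eT F) p) = fun p => DD eX (DD eX F) p + DD eY (DD eY F) p :=
    funext hw
  have d := fun w => smooth_diff (DD_smooth w (DD_smooth w hF))
  rw [← DD_add v (d eX) (d eY), ← e, DD_mul v (by fun_prop) (d eT)]
  simp [DD]

lemma IsSol.iter {m : ℝ} {F : PP → ℝ} (h : IsSol m F) (v : PP) (n : ℕ) :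
    IsSol m ((DD v)^[n] F) := by
  induction n with
  | zero => exact h
  | succ n ih => rw [Function.iterate_succ_apply']; exact ih.dd v

lemma DD_neg {E : Type*} [NormedAddCommGroup E] [NormedSpace ℝ E] (v : E) (F : E → ℝ) (p : E) :
    DD v (fun q => - F q) p = - DD v F p := by
  simp [DD, fderiv_fun_neg]

/-- Time reversal. -/
def tr (p : PP) : PP := (p.1, -p.2)

lemma DD_tr {F : PP → ℝ} (hF : Differentiable ℝ F) (v : PP) (p : PP) :
    DD v (fun q => F (tr q)) p = DD (tr v) F (tr p) := by
  have ht : HasFDerivAt tr ((ContinuousLinearMap.fst ℝ (ℝ × ℝ) ℝ).prod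
      (-(ContinuousLinearMap.snd ℝ (ℝ × ℝ) ℝ))) p :=
    hasFDerivAt_fst.prodMk hasFDerivAt_snd.neg
  have := ((hF (tr p)).hasFDerivAt.comp p ht).fderiv
  simp only [DD]
  change fderiv ℝ (F ∘ tr) p v = _
  rw [this]
  rfl

lemma DD_tr_X {F : PP → ℝ} (hF : Differentiable ℝ F) :
    DD eX (fun q => F (tr q)) = fun p => DD eX F (tr p) := by
  ext p; rw [DD_tr hF]; simp [tr]

lemma DD_tr_Y {F : PP → ℝ} (hF : Differentiable ℝ F) :
    DD eY (fun q => F (tr q)) = fun p => DD eY F (tr p) := by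
  ext p; rw [DD_tr hF]; simp [tr]

lemma DD_tr_T {F : PP → ℝ} (hF : Differentiable ℝ F) :
    DD eT (fun q => F (tr q)) = fun p => - DD eT F (tr p) := by
  ext p; rw [DD_tr hF]
  have : tr eT = - eT := by simp [tr]
  rw [this]
  simp only [DD]
  exact map_neg _ _

lemma tr_smooth : ContDiff ℝ (⊤ : ℕ∞) tr := contDiff_fst.prodMk contDiff_snd.neg

lemma IsSol.rev {m : ℝ} {F : PP → ℝ} (h : IsSol m F) : IsSol m (fun q => F (tr q)) := by
  obtain ⟨hF, hw⟩ := h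
  refine ⟨hF.comp tr_smooth, fun p => ?_⟩
  have d := smooth_diff hF
  have d' := fun w => smooth_diff (DD_smooth w hF)
  rw [DD_tr_X d, DD_tr_Y d, DD_tr_T d, DD_tr_X (d' _), DD_tr_Y (d' _), DD_neg, DD_tr_T (d' _),
    ← hw, neg_neg]

lemma en_rev (m : ℝ) {F : PP → ℝ} (hF : Differentiable ℝ F) (p : PP) :
    en m (fun q => F (tr q)) p = en m F (tr p) := by
  simp only [en]
  rw [DD_tr_X hF, DD_tr_Y hF, DD_tr_T hF]
  ring

lemma energy_all (m : ℝ) (hm : 0 < m) {F : PP → ℝ} (h : IsSol m F)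
    (hi : Integrable fun X => en m F (X, 0)) (T : ℝ) (K : Set (ℝ × ℝ)) (hK : IsCompact K) :
    ∫ X in K, en m F (X, T) ≤ ∫ X, en m F (X, 0) := by
  rcases le_total 0 T with hT | hT
  · exact energy_pos m hm h.1 h.2 hi T hT K hK
  · have hd := smooth_diff h.1
    have := energy_pos m hm h.rev.1 h.rev.2
      (by simp_rw [en_rev m hd]; simpa [tr] using hi) (-T) (by linarith) K hK
    simp_rw [en_rev m hd] at this
    simpa [tr] using this

lemma norm_DD {E : Type*} [NormedAddCommGroup E] [NormedSpace ℝ E] {v : E} (hv : ‖v‖ ≤ 1)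
    {f : E → ℝ} (hf : ContDiff ℝ (⊤ : ℕ∞) f) (k : ℕ) (X : E) :
    ‖iteratedFDeriv ℝ k (DD v f) X‖ ≤ ‖iteratedFDeriv ℝ (k + 1) f X‖ := by
  have h1 : ContDiff ℝ (⊤ : ℕ∞) (fderiv ℝ f) :=
    hf.fderiv_right (m := (⊤ : ℕ∞)) (by exact_mod_cast le_top)
  have := norm_iteratedFDeriv_clm_apply_const (c := v) (h1.contDiffAt (x := X)) (n := k)
    (by exact_mod_cast le_top)
  refine this.trans ?_
  rw [norm_iteratedFDeriv_fderiv]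
  exact mul_le_of_le_one_left (norm_nonneg _) hv

lemma iter_smooth {E : Type*} [NormedAddCommGroup E] [NormedSpace ℝ E] (v : E) {F : E → ℝ}
    (hF : ContDiff ℝ (⊤ : ℕ∞) F) (n : ℕ) : ContDiff ℝ (⊤ : ℕ∞) ((DD v)^[n] F) := by
  induction n with
  | zero => exact hF
  | succ n ih => rw [Function.iterate_succ_apply']; exact DD_smooth v ih

lemma norm_iter {E : Type*} [NormedAddCommGroup E] [NormedSpace ℝ E] {v : E} (hv : ‖v‖ ≤ 1)
    {f : E → ℝ} (hf : ContDiff ℝ (⊤ : ℕ∞) f) (n k : ℕ) (X : E) :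
    ‖iteratedFDeriv ℝ k ((DD v)^[n] f) X‖ ≤ ‖iteratedFDeriv ℝ (k + n) f X‖ := by
  induction n generalizing k with
  | zero => exact le_rfl
  | succ n ih =>
    rw [Function.iterate_succ_apply']
    refine (norm_DD hv (iter_smooth v hf n) k X).trans ((ih (k + 1)).trans (le_of_eq ?_))
    rw [show k + 1 + n = k + (n + 1) by omega]

lemma iter_slice {F : PP → ℝ} (hF : ContDiff ℝ (⊤ : ℕ∞) F) (v : ℝ × ℝ) (n : ℕ) (τ : ℝ) :
    (fun X => (DD (v, 0))^[n] F (X, τ)) = (DD v)^[n] (fun X => F (X, τ)) := by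
  induction n with
  | zero => rfl
  | succ n ih =>
    rw [Function.iterate_succ_apply', Function.iterate_succ_apply', ← ih]
    ext X
    exact (slice_S (smooth_diff (iter_smooth _ hF n)) v X τ).symm

lemma iter_comm {F : PP → ℝ} (hF : ContDiff ℝ (⊤ : ℕ∞) F) (v w : PP) (n : ℕ) :
    DD w ((DD v)^[n] F) = (DD v)^[n] (DD w F) := by
  induction n with
  | zero => rfl
  | succ n ih =>
    rw [Function.iterate_succ_apply', Function.iterate_succ_apply',
      DD_comm w v (iter_smooth v hF n), ih]

lemma Hk_bound {E : Type*} [NormedAddCommGroup E] [NormedSpace ℝ E] (f : ℝ × ℝ → E) (n : ℕ)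
    (hn : n ≤ 5) : ∫ X : ℝ × ℝ, ‖iteratedFDeriv ℝ n f X‖ ^ 2 ≤ HkNorm 5 f ^ 2 := by
  have h0 : 0 ≤ ∫ X : ℝ × ℝ, ‖iteratedFDeriv ℝ n f X‖ ^ 2 :=
    integral_nonneg fun X => by positivity
  have h1 : (∫ X : ℝ × ℝ, ‖iteratedFDeriv ℝ n f X‖ ^ 2) ^ ((1 : ℝ) / 2) ≤ HkNorm 5 f :=
    Finset.single_le_sum (f := fun n => (∫ X : ℝ × ℝ, ‖iteratedFDeriv ℝ n f X‖ ^ 2) ^ ((1 : ℝ) / 2))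
      (fun i _ => Real.rpow_nonneg (integral_nonneg fun X => by positivity) _)
      (Finset.mem_range.2 (by omega))
  rw [← Real.sqrt_eq_rpow] at h1
  calc _ = (Real.sqrt (∫ X : ℝ × ℝ, ‖iteratedFDeriv ℝ n f X‖ ^ 2)) ^ 2 := (Real.sq_sqrt h0).symm
    _ ≤ _ := by gcongr

lemma Hk_nonneg {E : Type*} [NormedAddCommGroup E] [NormedSpace ℝ E] (f : ℝ × ℝ → E) :
    0 ≤ HkNorm 5 f :=
  Finset.sum_nonneg fun i _ => Real.rpow_nonneg (integral_nonneg fun X => by positivity) _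

lemma Hk_int {E : Type*} [NormedAddCommGroup E] [NormedSpace ℝ E] (f : ℝ × ℝ → E)
    (hf : ContDiff ℝ (⊤ : ℕ∞) f) (hc : HasCompactSupport f) (n : ℕ) :
    Integrable fun X => ‖iteratedFDeriv ℝ n f X‖ ^ 2 := by
  refine Continuous.integrable_of_hasCompactSupport
    (((hf.continuous_iteratedFDeriv (m := n) (by exact_mod_cast le_top)).norm).pow 2) ?_
  exact (hc.iteratedFDeriv n).comp_left (g := fun x => ‖x‖ ^ 2) (by simp)

lemma energy_iter (m : ℝ) (hm : 0 < m) {F : PP → ℝ} (h : IsSol m F) (φ ψ : ℝ × ℝ → ℝ)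
    (h0 : ∀ X, F (X, 0) = φ X) (h1 : ∀ X, DD eT F (X, 0) = ψ X)
    (hφ : ContDiff ℝ (⊤ : ℕ∞) φ) (cφ : HasCompactSupport φ)
    (hψ : ContDiff ℝ (⊤ : ℕ∞) ψ) (cψ : HasCompactSupport ψ)
    (v : ℝ × ℝ) (hv : ‖v‖ ≤ 1) (n : ℕ) (hn : n ≤ 5) (T : ℝ)
    (K : Set (ℝ × ℝ)) (hK : IsCompact K) :
    ∫ X in K, en m ((DD (v, 0))^[n] F) (X, T) ≤
      (m + 2) * (HkNorm 5 (fderiv ℝ φ) + HkNorm 5 ψ) ^ 2 := by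
  have hF := h.1
  have hs := h.iter (v, 0) n
  have hφ' : ContDiff ℝ (⊤ : ℕ∞) (fderiv ℝ φ) :=
    hφ.fderiv_right (m := (⊤ : ℕ∞)) (by exact_mod_cast le_top)
  have i1 := (Hk_int ψ hψ cψ n).const_mul m
  have i2 := (Hk_int (fderiv ℝ φ) hφ' (cφ.fderiv ℝ) n).const_mul 2
  have bS : ∀ w : ℝ × ℝ, ‖w‖ ≤ 1 → ∀ X, DD (w, 0) ((DD (v, 0))^[n] F) (X, 0) ^ 2 ≤
      ‖iteratedFDeriv ℝ n (fderiv ℝ φ) X‖ ^ 2 := by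
    intro w hw X
    have e : DD (w, 0) ((DD (v, 0))^[n] F) (X, 0) = DD w ((DD v)^[n] φ) X := by
      rw [← slice_S (smooth_diff hs.1), iter_slice hF, show (fun X => F (X, 0)) = φ from funext h0]
    have b := norm_DD hw (iter_smooth v hφ n) 0 X
    rw [norm_iteratedFDeriv_zero] at b
    have b2 := b.trans (norm_iter hv hφ n (0 + 1) X)
    rw [show 0 + 1 + n = n + 1 by omega, ← norm_iteratedFDeriv_fderiv, Real.norm_eq_abs] at b2
    rw [e, ← sq_abs]
    gcongr
  have bT : ∀ X, DD eT ((DD (v, 0))^[n] F) (X, 0) ^ 2 ≤ ‖iteratedFDeriv ℝ n ψ X‖ ^ 2 := by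
    intro X
    have e : DD eT ((DD (v, 0))^[n] F) (X, 0) = (DD v)^[n] ψ X := by
      rw [iter_comm hF]
      have := congrFun (iter_slice (DD_smooth eT hF) v n 0) X
      rw [this, show (fun X => DD eT F (X, 0)) = ψ from funext h1]
    have b := norm_iter hv hψ n 0 X
    rw [norm_iteratedFDeriv_zero, zero_add, Real.norm_eq_abs] at b
    rw [e, ← sq_abs]
    gcongr
  have bE : ∀ X, en m ((DD (v, 0))^[n] F) (X, 0) ≤
      m * ‖iteratedFDeriv ℝ n ψ X‖ ^ 2 + 2 * ‖iteratedFDeriv ℝ n (fderiv ℝ φ) X‖ ^ 2 := by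
    intro X
    have a1 := mul_le_mul_of_nonneg_left (bT X) hm.le
    have a2 := bS (1, 0) (by simp) X
    have a3 := bS (0, 1) (by simp) X
    simp only [en]
    linarith
  have hen : ∀ X, 0 ≤ en m ((DD (v, 0))^[n] F) (X, 0) := fun X => by unfold en; positivity
  have iE : Integrable fun X => en m ((DD (v, 0))^[n] F) (X, 0) := by
    refine (i1.add i2).mono' ?_ (Filter.Eventually.of_forall fun X => ?_)
    · exact ((en_smooth m hs.1).continuous.comp
        (by fun_prop : Continuous fun X : ℝ × ℝ => (X, (0:ℝ)))).aestronglyMeasurable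
    · rw [Real.norm_eq_abs, abs_of_nonneg (hen X)]; exact bE X
  refine (energy_all m hm hs iE T K hK).trans ?_
  refine (integral_mono iE (i1.add i2) bE).trans ?_
  simp only [Pi.add_apply]
  rw [integral_add i1 i2, integral_const_mul, integral_const_mul]
  have c1 := mul_le_mul_of_nonneg_left (Hk_bound ψ n hn) hm.le
  have c2 := Hk_bound (fderiv ℝ φ) n hn
  have p1 := Hk_nonneg ψ
  have p2 := Hk_nonneg (fderiv ℝ φ)
  nlinarith [mul_nonneg p1 p2, mul_nonneg hm.le (mul_nonneg p1 p2), mul_nonneg hm.le (sq_nonneg (HkNorm 5 (fderiv ℝ φ))),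
    sq_nonneg (HkNorm 5 ψ)]

lemma main_aux (m : ℝ) (hm : 0 < m) {F : PP → ℝ} (h : IsSol m F) (φ ψ : ℝ × ℝ → ℝ)
    (h0 : ∀ X, F (X, 0) = φ X) (h1 : ∀ X, DD eT F (X, 0) = ψ X)
    (hφ : ContDiff ℝ (⊤ : ℕ∞) φ) (cφ : HasCompactSupport φ)
    (hψ : ContDiff ℝ (⊤ : ℕ∞) ψ) (cψ : HasCompactSupport ψ)
    (ε : ℝ) (hε : 0 < ε) (hε1 : ε ≤ 1) (τ : ℝ) (s : Finset (ℤ × ℤ)) :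
    (∑ j ∈ s, (F ((ε * j.1 + ε, ε * j.2), τ) + F ((ε * j.1 - ε, ε * j.2), τ)
      - 2 * F ((ε * j.1, ε * j.2), τ) - ε ^ 2 * DD eX (DD eX F) ((ε * j.1, ε * j.2), τ)) ^ 2 ≤
      16 * ε ^ 6 * ((m + 2) * (HkNorm 5 (fderiv ℝ φ) + HkNorm 5 ψ) ^ 2)) ∧
    (∑ j ∈ s, (F ((ε * j.1, ε * j.2 + ε), τ) + F ((ε * j.1, ε * j.2 - ε), τ)
      - 2 * F ((ε * j.1, ε * j.2), τ) - ε ^ 2 * DD eY (DD eY F) ((ε * j.1, ε * j.2), τ)) ^ 2 ≤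
      16 * ε ^ 6 * ((m + 2) * (HkNorm 5 (fderiv ℝ φ) + HkNorm 5 ψ) ^ 2)) := by
  set B := (m + 2) * (HkNorm 5 (fderiv ℝ φ) + HkNorm 5 ψ) ^ 2 with hB
  have hF := h.1
  have E := energy_iter m hm h φ ψ h0 h1 hφ cφ hψ cψ
  have cs : Continuous fun X : ℝ × ℝ => (X, τ) := by fun_prop
  have sm := fun v n => iter_smooth v hF n
  have en_int : ∀ v n (K : Set (ℝ × ℝ)), IsCompact K →
      IntegrableOn (fun X => en m ((DD v)^[n] F) (X, τ)) K := fun v n K hK =>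
    ((en_smooth m (sm v n)).continuous.comp cs).continuousOn.integrableOn_compact hK
  -- combined bound on compact sets
  have key : ∀ (v : ℝ × ℝ), ‖v‖ ≤ 1 → ∀ a b : ℝ × ℝ → ℝ, Continuous a → Continuous b →
      (∀ X, a X ^ 2 ≤ en m ((DD (v, 0))^[3] F) (X, τ)) →
      (∀ X, b X ^ 2 ≤ en m ((DD (v, 0))^[4] F) (X, τ)) →
      ∀ K : Set (ℝ × ℝ), IsCompact K → ∫ X in K, (a X ^ 2 + b X ^ 2) ≤ 2 * B := by
    intro v hv a b ca cb ha hb K hK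
    calc ∫ X in K, (a X ^ 2 + b X ^ 2)
        ≤ ∫ X in K, (en m ((DD (v, 0))^[3] F) (X, τ) + en m ((DD (v, 0))^[4] F) (X, τ)) := by
          refine setIntegral_mono ?_ ((en_int _ 3 K hK).add (en_int _ 4 K hK))
            fun X => add_le_add (ha X) (hb X)
          exact ((ca.pow 2).add (cb.pow 2)).continuousOn.integrableOn_compact hK
      _ = (∫ X in K, en m ((DD (v, 0))^[3] F) (X, τ)) +
          ∫ X in K, en m ((DD (v, 0))^[4] F) (X, τ) :=
        integral_add (en_int _ 3 K hK) (en_int _ 4 K hK)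
      _ ≤ B + B := add_le_add (E v hv 3 (by norm_num) τ K hK) (E v hv 4 (by norm_num) τ K hK)
      _ = 2 * B := by ring
  constructor
  · have := lattice_bound (fun x y => F ((x, y), τ)) (fun x y => DD eX F ((x, y), τ))
      (fun x y => DD eX (DD eX F) ((x, y), τ)) (fun x y => (DD eX)^[3] F ((x, y), τ))
      (fun x y => (DD eX)^[4] F ((x, y), τ)) (fun x y => DD eY ((DD eX)^[4] F) ((x, y), τ))
      (fun x y => slice_X (smooth_diff hF) x y τ)
      (fun x y => slice_X (smooth_diff (sm eX 1)) x y τ)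
      (fun x y => slice_X (smooth_diff (sm eX 2)) x y τ)
      (fun x y => slice_X (smooth_diff (sm eX 3)) x y τ)
      (fun x y => slice_Y (smooth_diff (sm eX 4)) x y τ)
      ((sm eX 4).continuous.comp cs) ((DD_smooth eY (sm eX 4)).continuous.comp cs)
      (2 * B) (key (1, 0) (by simp) _ _ ((sm eX 4).continuous.comp cs)
        ((DD_smooth eY (sm eX 4)).continuous.comp cs)
        (fun X => by
          simp only [en, Function.comp_apply]
          have : (DD eX)^[4] F (X, τ) = DD eX ((DD eX)^[3] F) (X, τ) := rfl
          rw [this]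
          nlinarith [mul_nonneg hm.le (sq_nonneg (DD eT ((DD eX)^[3] F) (X, τ))),
            sq_nonneg (DD eY ((DD eX)^[3] F) (X, τ))])
        (fun X => by
          simp only [en, Function.comp_apply]
          nlinarith [mul_nonneg hm.le (sq_nonneg (DD eT ((DD eX)^[4] F) (X, τ))),
            sq_nonneg (DD eX ((DD eX)^[4] F) (X, τ))])) ε hε hε1 s
    refine this.trans (le_of_eq (by ring))
  · have csw : Continuous fun X : ℝ × ℝ => ((X.2, X.1), τ) := by fun_prop
    have kk := key (0, 1) (by simp) _ _ ((sm eY 4).continuous.comp cs)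
        ((DD_smooth eX (sm eY 4)).continuous.comp cs)
        (fun X => by
          simp only [en, Function.comp_apply]
          have : (DD eY)^[4] F (X, τ) = DD eY ((DD eY)^[3] F) (X, τ) := rfl
          rw [this]
          nlinarith [mul_nonneg hm.le (sq_nonneg (DD eT ((DD eY)^[3] F) (X, τ))),
            sq_nonneg (DD eX ((DD eY)^[3] F) (X, τ))])
        (fun X => by
          simp only [en, Function.comp_apply]
          nlinarith [mul_nonneg hm.le (sq_nonneg (DD eT ((DD eY)^[4] F) (X, τ))),
            sq_nonneg (DD eY ((DD eY)^[4] F) (X, τ))])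
    have := lattice_bound (fun x y => F ((y, x), τ)) (fun x y => DD eY F ((y, x), τ))
      (fun x y => DD eY (DD eY F) ((y, x), τ)) (fun x y => (DD eY)^[3] F ((y, x), τ))
      (fun x y => (DD eY)^[4] F ((y, x), τ)) (fun x y => DD eX ((DD eY)^[4] F) ((y, x), τ))
      (fun x y => slice_Y (smooth_diff hF) y x τ)
      (fun x y => slice_Y (smooth_diff (sm eY 1)) y x τ)
      (fun x y => slice_Y (smooth_diff (sm eY 2)) y x τ)
      (fun x y => slice_Y (smooth_diff (sm eY 3)) y x τ)
      (fun x y => slice_X (smooth_diff (sm eY 4)) y x τ)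
      ((sm eY 4).continuous.comp csw) ((DD_smooth eX (sm eY 4)).continuous.comp csw)
      (2 * B) (by
        intro K hK
        have hmp : MeasurePreserving (Prod.swap : ℝ × ℝ → ℝ × ℝ) volume volume :=
          Measure.measurePreserving_swap
        have e := hmp.setIntegral_preimage_emb MeasurableEquiv.prodComm.measurableEmbedding
          (fun X : ℝ × ℝ => (DD eY)^[4] F (X, τ) ^ 2 + DD eX ((DD eY)^[4] F) (X, τ) ^ 2)
          (Prod.swap ⁻¹' K)
        have e2 : (Prod.swap ⁻¹' (Prod.swap ⁻¹' K) : Set (ℝ × ℝ)) = K := by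
          ext X; simp
        rw [e2] at e
        refine le_trans (le_of_eq e) (kk _ ?_)
        rw [← Set.image_swap_eq_preimage_swap]
        exact hK.image continuous_swap) ε hε hε1
      (s.map (Equiv.prodComm ℤ ℤ).toEmbedding)
    rw [Finset.sum_map] at this
    refine this.trans (le_of_eq (by ring))

theorem stmt5 (mbar : ℝ) (hmbar : 0 < mbar) :
    ∃ C : ℝ, ∀ (U : ℝ × ℝ → ℝ → ℝ) (φ ψ : ℝ × ℝ → ℝ),
      ContDiff ℝ (⊤ : ℕ∞) (fun p : (ℝ × ℝ) × ℝ => U p.1 p.2) →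
      (∀ X τ, mbar * deriv (deriv (U X)) τ = cLap (fun Y => U Y τ) X) →
      (∀ X, U X 0 = φ X) → (∀ X, deriv (U X) 0 = ψ X) →
      ContDiff ℝ (⊤ : ℕ∞) φ → HasCompactSupport φ →
      ContDiff ℝ (⊤ : ℕ∞) ψ → HasCompactSupport ψ →
      ∀ ε : ℝ, 0 < ε → ε ≤ 1 → ∀ t : ℝ,
        Real.sqrt (∑' j : ℤ × ℤ,
            (dLap (fun k => U (sc ε k) (ε * t)) j -
              ε ^ 2 * cLap (fun Y => U Y (ε * t)) (sc ε j)) ^ 2) ≤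
          4 * C * ε ^ 3 * (HkNorm 5 (fderiv ℝ φ) + HkNorm 5 ψ) := by
  refine ⟨2 * Real.sqrt (mbar + 2), ?_⟩
  intro U φ ψ hU hwave h0 h1 hφ cφ hψ cψ ε hε hε1 t
  set F : PP → ℝ := fun p => U p.1 p.2 with hFdef
  set τ := ε * t
  set N := HkNorm 5 (fderiv ℝ φ) + HkNorm 5 ψ with hN
  have hN0 : 0 ≤ N := add_nonneg (Hk_nonneg _) (Hk_nonneg _)
  have hd := smooth_diff hU
  have dT : ∀ X, deriv (U X) = fun s => DD eT F (X, s) := fun X =>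
    funext fun s => (slice_T hd X s).deriv
  have dTT : ∀ X s, deriv (deriv (U X)) s = DD eT (DD eT F) (X, s) := fun X s => by
    rw [dT]; exact (slice_T (smooth_diff (DD_smooth eT hU)) X s).deriv
  have dXX : ∀ X s, d2x1 (fun Y => U Y s) X = DD eX (DD eX F) (X, s) := by
    rintro ⟨x, y⟩ s
    have : (fun a => deriv (fun b => U (b, y) s) a) = fun a => DD eX F ((a, y), s) :=
      funext fun a => (slice_X hd a y s).deriv
    simp only [d2x1]
    rw [this]
    exact (slice_X (smooth_diff (DD_smooth eX hU)) x y s).deriv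
  have dYY : ∀ X s, d2x2 (fun Y => U Y s) X = DD eY (DD eY F) (X, s) := by
    rintro ⟨x, y⟩ s
    have : (fun a => deriv (fun b => U (x, b) s) a) = fun a => DD eY F ((x, a), s) :=
      funext fun a => (slice_Y hd x a s).deriv
    simp only [d2x2]
    rw [this]
    exact (slice_Y (smooth_diff (DD_smooth eY hU)) x y s).deriv
  have hsol : IsSol mbar F := by
    refine ⟨hU, fun p => ?_⟩
    have := hwave p.1 p.2
    rw [dTT, cLap, dXX, dYY] at this
    exact this
  have M := main_aux mbar hmbar hsol φ ψ h0 (fun X => by rw [← h1 X, dT]) hφ cφ hψ cψ ε hε hε1 τ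
  have hm2 : 0 ≤ mbar + 2 := by linarith
  have hRHS : 4 * (2 * Real.sqrt (mbar + 2)) * ε ^ 3 * N =
      Real.sqrt (64 * ε ^ 6 * ((mbar + 2) * N ^ 2)) := by
    have : 64 * ε ^ 6 * ((mbar + 2) * N ^ 2) = (8 * ε ^ 3 * N) ^ 2 * (mbar + 2) := by ring
    rw [this, Real.sqrt_mul (sq_nonneg _), Real.sqrt_sq (by positivity)]
    ring
  rw [hRHS]
  apply Real.sqrt_le_sqrt
  refine Real.tsum_le_of_sum_le (fun j => sq_nonneg _) fun s => ?_
  obtain ⟨M1, M2⟩ := M s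
  have key : ∀ j : ℤ × ℤ, (dLap (fun k => U (sc ε k) τ) j - ε ^ 2 * cLap (fun Y => U Y τ) (sc ε j)) ^ 2 ≤
      2 * (F ((ε * j.1 + ε, ε * j.2), τ) + F ((ε * j.1 - ε, ε * j.2), τ)
      - 2 * F ((ε * j.1, ε * j.2), τ) - ε ^ 2 * DD eX (DD eX F) ((ε * j.1, ε * j.2), τ)) ^ 2 +
      2 * (F ((ε * j.1, ε * j.2 + ε), τ) + F ((ε * j.1, ε * j.2 - ε), τ)
      - 2 * F ((ε * j.1, ε * j.2), τ) - ε ^ 2 * DD eY (DD eY F) ((ε * j.1, ε * j.2), τ)) ^ 2 := by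
    intro j
    have e : dLap (fun k => U (sc ε k) τ) j - ε ^ 2 * cLap (fun Y => U Y τ) (sc ε j) =
      (F ((ε * j.1 + ε, ε * j.2), τ) + F ((ε * j.1 - ε, ε * j.2), τ)
      - 2 * F ((ε * j.1, ε * j.2), τ) - ε ^ 2 * DD eX (DD eX F) ((ε * j.1, ε * j.2), τ)) +
      (F ((ε * j.1, ε * j.2 + ε), τ) + F ((ε * j.1, ε * j.2 - ε), τ)
      - 2 * F ((ε * j.1, ε * j.2), τ) - ε ^ 2 * DD eY (DD eY F) ((ε * j.1, ε * j.2), τ)) := by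
      rw [cLap, dXX, dYY]
      simp only [dLap, sc, hFdef, Prod.fst_add, Prod.snd_add, Prod.fst_sub, Prod.snd_sub,
        Int.cast_add, Int.cast_sub, Int.cast_one, add_zero, sub_zero, mul_add, mul_sub,
        mul_one]
      ring
    rw [e]
    exact add_sq_le.trans (le_of_eq (by ring))
  calc _ ≤ _ := Finset.sum_le_sum fun j _ => key j
    _ = _ := by rw [Finset.sum_add_distrib, ← Finset.mul_sum, ← Finset.mul_sum]
    _ ≤ 2 * (16 * ε ^ 6 * ((mbar + 2) * N ^ 2)) + 2 * (16 * ε ^ 6 * ((mbar + 2) * N ^ 2)) := by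
      linarith
    _ = _ := by ring

end
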